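/- arXiv:2006.15744 — 6 statements merged into one kernel-verified Lean document; each statement's English description precedes it below -/
import Mathlib

section
/- Let E be a finite set, let F : 2^E → [0,1] be a set function, and let f be its multilinear extension. Then for every x ∈ [0,1]^E and every v ∈ ℝ^E with x + v ∈ [0,1]^E and ‖v‖₂ ≤ ρ for some ρ > 0, one has |f(x) − f(x+v)| ≤ 4·|E|^{1/4}·√ρ. -/
open Finset

/-- The multilinear extension of a set function `F : 2^E → ℝ`:
`f(x) = ∑_{S ⊆ E} F(S) ∏_{e ∈ S} x(e) ∏_{e ∉ S} (1 − x(e))`. -/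
noncomputable def multilinearExt {E : Type*} [Fintype E] [DecidableEq E]
    (F : Finset E → ℝ) (x : E → ℝ) : ℝ :=
  ∑ S : Finset E, F S * (∏ e ∈ S, x e) * ∏ e ∈ Sᶜ, (1 - x e)

noncomputable def auxW {E : Type*} [Fintype E] [DecidableEq E]
    (x : E → ℝ) (S : Finset E) : ℝ :=
  (∏ e ∈ S, √(x e)) * ∏ e ∈ Sᶜ, √(1 - x e)

lemma auxW_sq {E : Type*} [Fintype E] [DecidableEq E] (x : E → ℝ)
    (hx : ∀ e, x e ∈ Set.Icc (0 : ℝ) 1) (S : Finset E) :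
    auxW x S ^ 2 = (∏ e ∈ S, x e) * ∏ e ∈ Sᶜ, (1 - x e) := by
  unfold auxW
  rw [mul_pow, ← Finset.prod_pow, ← Finset.prod_pow]
  congr 1
  · exact Finset.prod_congr rfl fun e _ => Real.sq_sqrt (hx e).1
  · exact Finset.prod_congr rfl fun e _ => Real.sq_sqrt (by linarith [(hx e).2])

lemma auxW_mul {E : Type*} [Fintype E] [DecidableEq E] (x y : E → ℝ) :
    ∑ S, auxW x S * auxW y S = ∏ e, (√(x e) * √(y e) + √(1 - x e) * √(1 - y e)) := by
  rw [Finset.prod_add, Finset.powerset_univ]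
  refine Finset.sum_congr rfl fun S _ => ?_
  unfold auxW
  rw [← Finset.compl_eq_univ_sdiff, Finset.prod_mul_distrib, Finset.prod_mul_distrib]
  ring

lemma auxW_sum {E : Type*} [Fintype E] [DecidableEq E] (x : E → ℝ)
    (hx : ∀ e, x e ∈ Set.Icc (0 : ℝ) 1) : ∑ S, auxW x S ^ 2 = 1 := by
  simp_rw [sq]
  rw [auxW_mul]
  refine Finset.prod_eq_one fun e _ => ?_
  rw [Real.mul_self_sqrt (hx e).1, Real.mul_self_sqrt (by linarith [(hx e).2])]
  ring

lemma aux_factor (p q : ℝ) (hp : p ∈ Set.Icc (0 : ℝ) 1) (hq : q ∈ Set.Icc (0 : ℝ) 1) :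
    1 - |p - q| ≤ √p * √q + √(1 - p) * √(1 - q) := by
  obtain ⟨hp0, hp1⟩ := hp
  obtain ⟨hq0, hq1⟩ := hq
  rcases le_total p q with h | h
  · rw [abs_of_nonpos (by linarith)]
    have h1 := Real.sqrt_le_sqrt h
    have h2 := Real.sqrt_le_sqrt (show 1 - q ≤ 1 - p by linarith)
    nlinarith [Real.mul_self_sqrt hp0, Real.mul_self_sqrt (show 0 ≤ 1 - q by linarith),
      mul_le_mul_of_nonneg_left h1 (Real.sqrt_nonneg p),
      mul_le_mul_of_nonneg_left h2 (Real.sqrt_nonneg (1 - q))]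
  · rw [abs_of_nonneg (by linarith)]
    have h1 := Real.sqrt_le_sqrt h
    have h2 := Real.sqrt_le_sqrt (show 1 - p ≤ 1 - q by linarith)
    nlinarith [Real.mul_self_sqrt hq0, Real.mul_self_sqrt (show 0 ≤ 1 - p by linarith),
      mul_le_mul_of_nonneg_left h1 (Real.sqrt_nonneg q),
      mul_le_mul_of_nonneg_left h2 (Real.sqrt_nonneg (1 - p))]

lemma aux_prod {E : Type*} [DecidableEq E] (s : Finset E) (a : E → ℝ)
    (h0 : ∀ e, 0 ≤ a e) (h1 : ∀ e, a e ≤ 1) :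
    1 - ∑ e ∈ s, a e ≤ ∏ e ∈ s, (1 - a e) := by
  induction s using Finset.induction_on with
  | empty => simp
  | insert e s he ih =>
    rw [Finset.sum_insert he, Finset.prod_insert he]
    have : 0 ≤ ∑ e ∈ s, a e := Finset.sum_nonneg fun i _ => h0 i
    nlinarith [mul_le_mul_of_nonneg_left ih (show 0 ≤ 1 - a e by linarith [h1 e]),
      mul_nonneg (h0 e) this]

/-- For `F : 2^E → [0,1]` with multilinear extension `f`, for every `x ∈ [0,1]^E`
and `v` with `x + v ∈ [0,1]^E` and `‖v‖₂ ≤ ρ` (`ρ > 0`), one has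
`|f(x) − f(x+v)| ≤ 4 |E|^{1/4} √ρ`. -/
theorem multilinearExt_dist_le {E : Type*} [Fintype E] [DecidableEq E]
    (F : Finset E → ℝ) (hF : ∀ S, F S ∈ Set.Icc (0 : ℝ) 1)
    (ρ : ℝ) (hρ : 0 < ρ) (x v : E → ℝ)
    (hx : ∀ e, x e ∈ Set.Icc (0 : ℝ) 1)
    (hxv : ∀ e, x e + v e ∈ Set.Icc (0 : ℝ) 1)
    (hv : Real.sqrt (∑ e, v e ^ 2) ≤ ρ) :
    |multilinearExt F x - multilinearExt F (fun e => x e + v e)| ≤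
      4 * (Fintype.card E : ℝ) ^ ((1 : ℝ) / 4) * Real.sqrt ρ := by
  set y : E → ℝ := fun e => x e + v e with hy
  have hy' : ∀ e, y e ∈ Set.Icc (0 : ℝ) 1 := hxv
  set B := ∑ S, auxW x S * auxW y S with hB
  set A := ∑ e, |v e| with hA
  have hBA : 1 - A ≤ B := by
    rw [hB, auxW_mul]
    have hv1 : ∀ e, |v e| ≤ 1 := fun e => by
      have h1 := hx e
      have h2 := hxv e
      rw [abs_le]
      constructor <;> linarith [h1.1, h1.2, h2.1, h2.2]
    refine (aux_prod univ (fun e => |v e|) (fun e => abs_nonneg _) hv1).trans ?_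
    refine Finset.prod_le_prod (fun e _ => by linarith [hv1 e]) fun e _ => ?_
    have := aux_factor (x e) (y e) (hx e) (hy' e)
    have h3 : |x e - y e| = |v e| := by
      rw [hy, ← abs_neg (v e)]; congr 1; ring
    rwa [h3] at this
  set D := ∑ S, |auxW x S - auxW y S| * |auxW x S + auxW y S| with hD
  have hD0 : 0 ≤ D := Finset.sum_nonneg fun S _ => by positivity
  have hfD : |multilinearExt F x - multilinearExt F y| ≤ D := by
    unfold multilinearExt
    rw [← Finset.sum_sub_distrib]
    refine (Finset.abs_sum_le_sum_abs _ _).trans (Finset.sum_le_sum fun S _ => ?_)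
    rw [mul_assoc, mul_assoc, ← auxW_sq x hx, ← auxW_sq y hy', ← mul_sub, abs_mul,
      abs_of_nonneg (hF S).1, ← abs_mul]
    have : auxW x S ^ 2 - auxW y S ^ 2 = (auxW x S - auxW y S) * (auxW x S + auxW y S) := by ring
    rw [this]
    exact mul_le_of_le_one_left (abs_nonneg _) (hF S).2
  have hX := auxW_sum x hx
  have hY := auxW_sum y hy'
  have hD2 : D ^ 2 ≤ (2 - 2 * B) * (2 + 2 * B) := by
    refine (Finset.sum_mul_sq_le_sq_mul_sq _ _ _).trans (le_of_eq ?_)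
    simp_rw [sq_abs]
    congr 1
    · simp_rw [sub_sq, Finset.sum_add_distrib, Finset.sum_sub_distrib, mul_assoc]
      rw [← Finset.mul_sum, hX, hY]; ring
    · simp_rw [add_sq, Finset.sum_add_distrib, mul_assoc]
      rw [← Finset.mul_sum, hX, hY]; ring
  have hA0 : 0 ≤ A := Finset.sum_nonneg fun e _ => abs_nonneg _
  have hAn : A ≤ √(Fintype.card E : ℝ) * ρ := by
    have h1 : A ^ 2 ≤ (Fintype.card E : ℝ) * ∑ e, v e ^ 2 := by
      have := sq_sum_le_card_mul_sum_sq (s := (univ : Finset E)) (f := fun e => |v e|)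
      simpa [sq_abs] using this
    calc A = √(A ^ 2) := (Real.sqrt_sq hA0).symm
      _ ≤ √((Fintype.card E : ℝ) * ∑ e, v e ^ 2) := Real.sqrt_le_sqrt h1
      _ = √(Fintype.card E : ℝ) * √(∑ e, v e ^ 2) := Real.sqrt_mul (by positivity) _
      _ ≤ _ := mul_le_mul_of_nonneg_left hv (Real.sqrt_nonneg _)
  refine hfD.trans (abs_le_of_sq_le_sq' ?_ (by positivity)).2
  have hc : ((Fintype.card E : ℝ) ^ ((1 : ℝ) / 4)) ^ 2 = √(Fintype.card E : ℝ) := by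
    rw [Real.sqrt_eq_rpow, ← Real.rpow_natCast, ← Real.rpow_mul (by positivity)]
    norm_num
  rw [mul_pow, mul_pow, hc, Real.sq_sqrt hρ.le]
  nlinarith [sq_nonneg (1 - B)]
end

section
/- Let E be a finite set, let F : 2^E → [0,1] be a monotone submodular set function with multilinear extension f, and let x* ∈ [0,1]^E. Suppose y ∈ [0,1]^E satisfies ‖y − x*‖₂ ≤ ρ for some ρ > 0. Then for every x ∈ [0,1]^E, ⟨y, ∇f(x)⟩ ≥ f(x*) − f(x) − 4·|E|^{1/4}·√ρ. -/
open Finset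

/-- The partial derivative `∂f/∂x(e)` of the multilinear extension at `x`. -/
noncomputable def multilinearGrad {E : Type*} [Fintype E] [DecidableEq E]
    (F : Finset E → ℝ) (x : E → ℝ) (e : E) : ℝ :=
  deriv (fun t => multilinearExt F (Function.update x e t)) (x e)

theorem mE_split {E : Type*} [Fintype E] [DecidableEq E]
    (F : Finset E → ℝ) (x : E → ℝ) (e : E) :
    multilinearExt F x = ∑ S ∈ (univ.erase e).powerset,
      (x e * F (insert e S) + (1 - x e) * F S) *
        ((∏ i ∈ S, x i) * ∏ i ∈ (univ.erase e) \ S, (1 - x i)) := by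
  unfold multilinearExt
  have h1 : (univ : Finset (Finset E)) = (insert e (univ.erase e)).powerset := by
    rw [Finset.insert_erase (mem_univ e)]; simp
  rw [h1, Finset.sum_powerset_insert (by simp), ← Finset.sum_add_distrib]
  refine Finset.sum_congr rfl fun S hS => ?_
  have heS : e ∉ S := fun h => by
    have := Finset.mem_powerset.1 hS h
    simp at this
  have h2 : Sᶜ = insert e ((univ.erase e) \ S) := by
    ext i; simp only [mem_compl, mem_insert, mem_sdiff, mem_erase, mem_univ]
    by_cases h : i = e <;> simp_all
  have h3 : (insert e S)ᶜ = (univ.erase e) \ S := by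
    ext i; simp
  rw [h3, h2, Finset.prod_insert heS, Finset.prod_insert (by simp)]
  ring

theorem mE_weight_nonneg {E : Type*} [DecidableEq E] (x : E → ℝ)
    (hx : ∀ e, x e ∈ Set.Icc (0 : ℝ) 1) (S T : Finset E) :
    0 ≤ (∏ i ∈ S, x i) * ∏ i ∈ T, (1 - x i) :=
  mul_nonneg (Finset.prod_nonneg fun i _ => (hx i).1)
    (Finset.prod_nonneg fun i _ => sub_nonneg.2 (hx i).2)

theorem mE_mono {E : Type*} [Fintype E] [DecidableEq E]
    (F G : Finset E → ℝ) (x : E → ℝ) (hx : ∀ e, x e ∈ Set.Icc (0 : ℝ) 1)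
    (h : ∀ S, F S ≤ G S) : multilinearExt F x ≤ multilinearExt G x := by
  unfold multilinearExt
  refine Finset.sum_le_sum fun S _ => ?_
  rw [mul_assoc, mul_assoc]
  exact mul_le_mul_of_nonneg_right (h S) (mE_weight_nonneg x hx _ _)

theorem mE_add {E : Type*} [Fintype E] [DecidableEq E]
    (F G : Finset E → ℝ) (x : E → ℝ) :
    multilinearExt (fun S => F S + G S) x = multilinearExt F x + multilinearExt G x := by
  simp only [multilinearExt, ← Finset.sum_add_distrib]
  exact Finset.sum_congr rfl fun S _ => by ring

theorem mE_smul {E : Type*} [Fintype E] [DecidableEq E]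
    (c : ℝ) (F : Finset E → ℝ) (x : E → ℝ) :
    multilinearExt (fun S => c * F S) x = c * multilinearExt F x := by
  simp only [multilinearExt, Finset.mul_sum]
  exact Finset.sum_congr rfl fun S _ => by ring

theorem mE_sum {E ι : Type*} [Fintype E] [DecidableEq E]
    (s : Finset ι) (F : ι → Finset E → ℝ) (x : E → ℝ) :
    multilinearExt (fun S => ∑ i ∈ s, F i S) x = ∑ i ∈ s, multilinearExt (F i) x := by
  simp only [multilinearExt, Finset.sum_mul]
  exact Finset.sum_comm

theorem mE_const {E : Type*} [Fintype E] [DecidableEq E] (c : ℝ) (x : E → ℝ) :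
    multilinearExt (fun _ => c) x = c := by
  have h := Finset.prod_add x (fun e => 1 - x e) univ
  simp only [add_sub_cancel, Finset.prod_const_one, Finset.powerset_univ] at h
  simp only [multilinearExt, mul_assoc, ← Finset.mul_sum, Finset.compl_eq_univ_sdiff]
  rw [← h, mul_one]

theorem mE_weight_sum {E : Type*} [Fintype E] [DecidableEq E] (x : E → ℝ) (e : E) :
    ∑ S ∈ (univ.erase e).powerset,
        ((∏ i ∈ S, x i) * ∏ i ∈ (univ.erase e) \ S, (1 - x i)) = 1 := by
  have h := Finset.prod_add x (fun e => 1 - x e) (univ.erase e)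
  simp only [add_sub_cancel, Finset.prod_const_one] at h
  exact h.symm

theorem mE_ind {E : Type*} [Fintype E] [DecidableEq E] (x : E → ℝ) (e : E) :
    multilinearExt (fun S => if e ∈ S then 1 else 0) x = x e := by
  rw [mE_split _ x e]
  calc _ = ∑ S ∈ (univ.erase e).powerset, x e *
        ((∏ i ∈ S, x i) * ∏ i ∈ (univ.erase e) \ S, (1 - x i)) := by
        refine Finset.sum_congr rfl fun S hS => ?_
        have heS : e ∉ S := fun h => by
          have := Finset.mem_powerset.1 hS h
          simp at this
        simp [heS]
    _ = x e := by rw [← Finset.mul_sum, mE_weight_sum, mul_one]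

theorem mE_grad {E : Type*} [Fintype E] [DecidableEq E]
    (F : Finset E → ℝ) (x : E → ℝ) (e : E) :
    multilinearGrad F x e = ∑ S ∈ (univ.erase e).powerset, (F (insert e S) - F S) *
        ((∏ i ∈ S, x i) * ∏ i ∈ (univ.erase e) \ S, (1 - x i)) := by
  unfold multilinearGrad
  have h : (fun t => multilinearExt F (Function.update x e t)) = fun t =>
      (∑ S ∈ (univ.erase e).powerset, (F (insert e S) - F S) *
        ((∏ i ∈ S, x i) * ∏ i ∈ (univ.erase e) \ S, (1 - x i))) * t +
      ∑ S ∈ (univ.erase e).powerset, F S *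
        ((∏ i ∈ S, x i) * ∏ i ∈ (univ.erase e) \ S, (1 - x i)) := by
    funext t
    rw [mE_split _ _ e, Finset.sum_mul, ← Finset.sum_add_distrib]
    refine Finset.sum_congr rfl fun S hS => ?_
    have heS : e ∉ S := fun h => by
      have := Finset.mem_powerset.1 hS h
      simp at this
    have h1 : ∏ i ∈ S, Function.update x e t i = ∏ i ∈ S, x i :=
      Finset.prod_congr rfl fun i hi => by
        rw [Function.update_of_ne]; rintro rfl; exact heS hi
    have h2 : ∏ i ∈ (univ.erase e) \ S, (1 - Function.update x e t i)
        = ∏ i ∈ (univ.erase e) \ S, (1 - x i) :=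
      Finset.prod_congr rfl fun i hi => by
        rw [Function.update_of_ne]; rintro rfl; simp at hi
    rw [h1, h2, Function.update_self]
    ring
  rw [h]
  simp

theorem union_bound {E : Type*} [DecidableEq E]
    (F : Finset E → ℝ)
    (hmono : ∀ S T : Finset E, S ⊆ T → F S ≤ F T)
    (hsub : ∀ S T : Finset E, S ⊆ T → ∀ e ∉ T,
      F (insert e T) - F T ≤ F (insert e S) - F S) (R T : Finset E) :
    F (R ∪ T) ≤ F R + ∑ e ∈ T, (F (insert e R) - F R) := by
  induction T using Finset.induction_on with
  | empty => simp
  | insert a T ha ih =>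
    rw [Finset.sum_insert ha, Finset.union_insert]
    by_cases h : a ∈ R ∪ T
    · rw [Finset.insert_eq_self.2 h]
      have := hmono R (insert a R) (Finset.subset_insert _ _)
      linarith
    · have := hsub R (R ∪ T) Finset.subset_union_left a h
      linarith

/-- For a monotone submodular `F : 2^E → [0,1]` with multilinear extension `f`:
if `‖y − x*‖₂ ≤ ρ` with `y ∈ [0,1]^E`, then for every `x ∈ [0,1]^E`,
`⟨y, ∇f(x)⟩ ≥ f(x*) − f(x) − 4 |E|^{1/4} √ρ`. -/
theorem inner_grad_ge_of_near_opt {E : Type*} [Fintype E] [DecidableEq E]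
    (F : Finset E → ℝ) (hF : ∀ S, F S ∈ Set.Icc (0 : ℝ) 1)
    (hmono : ∀ S T : Finset E, S ⊆ T → F S ≤ F T)
    (hsub : ∀ S T : Finset E, S ⊆ T → ∀ e ∉ T,
      F (insert e T) - F T ≤ F (insert e S) - F S)
    (xstar y x : E → ℝ) (ρ : ℝ) (hρ : 0 < ρ)
    (hxstar : ∀ e, xstar e ∈ Set.Icc (0 : ℝ) 1)
    (hy : ∀ e, y e ∈ Set.Icc (0 : ℝ) 1)
    (hx : ∀ e, x e ∈ Set.Icc (0 : ℝ) 1)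
    (hdist : Real.sqrt (∑ e, (y e - xstar e) ^ 2) ≤ ρ) :
    multilinearExt F xstar - multilinearExt F x -
        4 * (Fintype.card E : ℝ) ^ ((1 : ℝ) / 4) * Real.sqrt ρ ≤
      ∑ e, y e * multilinearGrad F x e := by
  have hg0 : ∀ e, 0 ≤ multilinearGrad F x e := fun e => by
    rw [mE_grad]
    exact Finset.sum_nonneg fun S _ => mul_nonneg
      (sub_nonneg.2 (hmono _ _ (Finset.subset_insert _ _))) (mE_weight_nonneg x hx _ _)
  have hg1 : ∀ e, multilinearGrad F x e ≤ 1 := fun e => by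
    rw [mE_grad]
    refine (Finset.sum_le_sum fun S _ => ?_).trans (mE_weight_sum x e).le
    have h1 := (hF (insert e S)).2
    have h2 := (hF S).1
    have h3 : F (insert e S) - F S ≤ 1 := by linarith
    exact mul_le_of_le_one_left (mE_weight_nonneg x hx _ _) h3
  have hge : ∀ e, multilinearExt (fun S => F (insert e S) + (-1) * F S) x
      ≤ multilinearGrad F x e := fun e => by
    rw [mE_grad, mE_split _ x e]
    refine Finset.sum_le_sum fun S _ => ?_
    refine mul_le_mul_of_nonneg_right ?_ (mE_weight_nonneg x hx _ _)
    rw [Finset.insert_idem]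
    have h1 := hmono S (insert e S) (Finset.subset_insert _ _)
    have h2 := (hx e).1
    nlinarith [mul_nonneg h2 (sub_nonneg.2 h1)]
  have hR : ∀ R, multilinearExt F xstar ≤
      F R + ∑ e, xstar e * (F (insert e R) + (-1) * F R) := fun R => by
    have h := mE_mono F (fun T => F R + ∑ e, (F (insert e R) + (-1) * F R) *
      (if e ∈ T then 1 else 0)) xstar hxstar (fun T => by
        have h1 := union_bound F hmono hsub R T
        have h2 := hmono T (R ∪ T) Finset.subset_union_right
        have h3 : ∑ e, (F (insert e R) + (-1) * F R) * (if e ∈ T then (1 : ℝ) else 0)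
            = ∑ e ∈ T, (F (insert e R) - F R) := by
          simp [Finset.sum_ite_mem, sub_eq_add_neg]
        rw [h3]; linarith)
    rw [mE_add, mE_const, mE_sum] at h
    simp only [mE_smul, mE_ind] at h
    simpa only [mul_comm] using h
  have hmain : multilinearExt F xstar ≤
      multilinearExt F x + ∑ e, xstar e * multilinearGrad F x e := by
    have h := mE_mono _ _ x hx hR
    rw [mE_const, mE_add, mE_sum] at h
    refine h.trans (add_le_add_right (Finset.sum_le_sum fun e _ => ?_) _)
    rw [mE_smul]
    exact mul_le_mul_of_nonneg_left (hge e) (hxstar e).1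
  have hfx1 : multilinearExt F xstar ≤ 1 := by
    have h := mE_mono F (fun _ => 1) xstar hxstar (fun S => (hF S).2)
    rwa [mE_const] at h
  have hfx0 : 0 ≤ multilinearExt F x := by
    have h := mE_mono (fun _ => 0) F x hx (fun S => (hF S).1)
    rwa [mE_const] at h
  have hyg : 0 ≤ ∑ e, y e * multilinearGrad F x e :=
    Finset.sum_nonneg fun e _ => mul_nonneg (hy e).1 (hg0 e)
  set n : ℝ := (Fintype.card E : ℝ) with hn
  have hn0 : 0 ≤ n := Nat.cast_nonneg _
  set b : ℝ := n ^ ((1 : ℝ) / 4) * Real.sqrt ρ with hb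
  have hb0 : 0 ≤ b := by positivity
  have hb2 : b ^ 2 = Real.sqrt n * ρ := by
    rw [hb, mul_pow, Real.sq_sqrt hρ.le, ← Real.rpow_natCast, ← Real.rpow_mul hn0,
      Real.sqrt_eq_rpow]
    norm_num
  have hl1 : ∑ e, |y e - xstar e| ≤ b ^ 2 := by
    have h1 : (∑ e, |y e - xstar e|) ^ 2 ≤ n * ∑ e, (y e - xstar e) ^ 2 := by
      have := sq_sum_le_card_mul_sum_sq (s := (univ : Finset E)) (f := fun e => |y e - xstar e|)
      simpa [sq_abs] using this
    rw [hb2]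
    calc _ ≤ Real.sqrt (n * ∑ e, (y e - xstar e) ^ 2) := Real.le_sqrt_of_sq_le h1
      _ = Real.sqrt n * Real.sqrt (∑ e, (y e - xstar e) ^ 2) := Real.sqrt_mul hn0 _
      _ ≤ _ := by gcongr
  have hdiff : ∑ e, xstar e * multilinearGrad F x e ≤
      ∑ e, y e * multilinearGrad F x e + ∑ e, |y e - xstar e| := by
    rw [← Finset.sum_add_distrib]
    refine Finset.sum_le_sum fun e _ => ?_
    have h1 := neg_abs_le (y e - xstar e)
    have h2 := abs_nonneg (y e - xstar e)
    have := hg0 e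
    have := hg1 e
    nlinarith
  rw [mul_assoc, ← hb]
  rcases le_total b 1 with h | h
  · nlinarith
  · linarith
end

section
/- Let E be a finite set and let F : 2^E → ℝ be a monotone set function with multilinear extension f. Then f is monotone on [0,1]^E: every partial derivative ∂f/∂x(e) is nonnegative at every point of [0,1]^E, and in particular f(x) ≤ f(y) whenever x, y ∈ [0,1]^E satisfy x(e) ≤ y(e) for all e ∈ E. -/
open Finset

theorem mle_update {E : Type*} [Fintype E] [DecidableEq E]
    (F : Finset E → ℝ) (x : E → ℝ) (e : E) (t : ℝ) :
    multilinearExt F (Function.update x e t) =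
      ∑ S ∈ (univ.erase e).powerset, (F S * (1 - t) + F (insert e S) * t) *
        ((∏ i ∈ S, x i) * ∏ i ∈ (univ.erase e) \ S, (1 - x i)) := by
  unfold multilinearExt
  rw [← Finset.powerset_univ, ← Finset.insert_erase (Finset.mem_univ e),
    Finset.sum_powerset_insert (Finset.notMem_erase e univ), ← Finset.sum_add_distrib]
  rw [Finset.insert_erase (Finset.mem_univ e)]
  refine Finset.sum_congr rfl fun S hS => ?_
  have heS : e ∉ S := fun h => Finset.notMem_erase e univ (Finset.mem_powerset.1 hS h)
  have h1 : ∏ i ∈ S, Function.update x e t i = ∏ i ∈ S, x i :=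
    Finset.prod_congr rfl fun i hi => by
      rw [Function.update_of_ne (by rintro rfl; exact heS hi)]
  have h2 : ∏ i ∈ (univ.erase e) \ S, (1 - Function.update x e t i)
      = ∏ i ∈ (univ.erase e) \ S, (1 - x i) :=
    Finset.prod_congr rfl fun i hi => by
      rw [Function.update_of_ne (by rintro rfl; simp at hi)]
  have h3 : Sᶜ = insert e ((univ.erase e) \ S) := by
    ext i; by_cases h : i = e
    · subst h; simp [heS]
    · simp [h]
  have h4 : (insert e S)ᶜ = (univ.erase e) \ S := by
    ext i; simp
  rw [h4, h3, Finset.prod_insert heS, Finset.prod_insert (by simp), h1, h2,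
    Function.update_self]
  ring

theorem mle_weight_nonneg {E : Type*} [Fintype E] [DecidableEq E]
    (x : E → ℝ) (hx : ∀ e, x e ∈ Set.Icc (0 : ℝ) 1) (S T : Finset E) :
    0 ≤ (∏ i ∈ S, x i) * ∏ i ∈ T, (1 - x i) :=
  mul_nonneg (Finset.prod_nonneg fun i _ => (hx i).1)
    (Finset.prod_nonneg fun i _ => sub_nonneg.2 (hx i).2)

theorem mle_update_mono {E : Type*} [Fintype E] [DecidableEq E]
    (F : Finset E → ℝ) (hmono : ∀ S T : Finset E, S ⊆ T → F S ≤ F T)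
    (x : E → ℝ) (hx : ∀ e, x e ∈ Set.Icc (0 : ℝ) 1) (e : E) :
    Monotone (fun t => multilinearExt F (Function.update x e t)) := by
  intro s t hst
  simp only [mle_update]
  refine Finset.sum_le_sum fun S _ => mul_le_mul_of_nonneg_right ?_ (mle_weight_nonneg x hx _ _)
  nlinarith [hmono S (insert e S) (Finset.subset_insert e S)]

/-- If `F : 2^E → ℝ` is monotone, then its multilinear extension `f` is monotone on
`[0,1]^E`: all partial derivatives are nonnegative there, and `f(x) ≤ f(y)` whenever
`x ≤ y` coordinatewise in `[0,1]^E`. -/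
theorem multilinearExt_monotone {E : Type*} [Fintype E] [DecidableEq E]
    (F : Finset E → ℝ)
    (hmono : ∀ S T : Finset E, S ⊆ T → F S ≤ F T) :
    (∀ x : E → ℝ, (∀ e, x e ∈ Set.Icc (0 : ℝ) 1) → ∀ e, 0 ≤ multilinearGrad F x e) ∧
    (∀ x y : E → ℝ, (∀ e, x e ∈ Set.Icc (0 : ℝ) 1) → (∀ e, y e ∈ Set.Icc (0 : ℝ) 1) →
      (∀ e, x e ≤ y e) → multilinearExt F x ≤ multilinearExt F y) := by
  refine ⟨fun x hx e => (mle_update_mono F hmono x hx e).deriv_nonneg, fun x y hx hy hxy => ?_⟩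
  have key : ∀ A : Finset E, multilinearExt F x ≤ multilinearExt F (A.piecewise y x) := by
    intro A
    induction A using Finset.induction_on with
    | empty => simp
    | insert a A ha ih =>
      refine ih.trans ?_
      have hz : ∀ e, A.piecewise y x e ∈ Set.Icc (0 : ℝ) 1 := by
        intro e
        by_cases h : e ∈ A
        · simpa [h] using hy e
        · simpa [h] using hx e
      have := mle_update_mono F hmono (A.piecewise y x) hz a (hxy a)
      rw [Finset.piecewise_insert]
      have h0 : Function.update (A.piecewise y x) a (x a) = A.piecewise y x := by
        rw [Function.update_eq_self_iff]
        simp [ha]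
      simpa only [h0] using this
  simpa using key univ
end

section
/- Let E be a finite set and let F : 2^E → ℝ be a submodular set function with multilinear extension f. Then f is concave along any nonnegative direction: for every x ∈ [0,1]^E and every d ∈ ℝ^E with d ≥ 0, the function t ↦ f(x + t·d) is concave on the interval {t ≥ 0 : x + t·d ∈ [0,1]^E}. -/
open Finset

noncomputable def mleAux {E : Type*} [DecidableEq E]
    (A : Finset E) (F : Finset E → ℝ) (x : E → ℝ) : ℝ :=
  ∑ S ∈ A.powerset, F S * (∏ e ∈ S, x e) * ∏ e ∈ A \ S, (1 - x e)

theorem mleAux_insert {E : Type*} [DecidableEq E] (A : Finset E) (a : E) (ha : a ∉ A)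
    (F : Finset E → ℝ) (x : E → ℝ) :
    mleAux (insert a A) F x =
      x a * mleAux A (fun S => F (insert a S)) x + (1 - x a) * mleAux A F x := by
  unfold mleAux
  rw [Finset.sum_powerset_insert ha, add_comm, Finset.mul_sum, Finset.mul_sum]
  congr 1
  · refine Finset.sum_congr rfl fun S hS => ?_
    have haS : a ∉ S := fun h => ha (Finset.mem_powerset.1 hS h)
    have h1 : insert a A \ insert a S = A \ S := by
      ext e; simp only [mem_sdiff, mem_insert]; grind
    rw [h1, Finset.prod_insert haS]; ring
  · refine Finset.sum_congr rfl fun S hS => ?_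
    have haS : a ∉ S := fun h => ha (Finset.mem_powerset.1 hS h)
    rw [Finset.insert_sdiff_of_notMem _ haS, Finset.prod_insert (by simp [ha])]; ring

theorem mleAux_mono {E : Type*} [DecidableEq E] (A : Finset E)
    (F G : Finset E → ℝ) (x : E → ℝ) (hx : ∀ e, x e ∈ Set.Icc (0 : ℝ) 1)
    (h : ∀ S ⊆ A, F S ≤ G S) : mleAux A F x ≤ mleAux A G x := by
  unfold mleAux
  refine Finset.sum_le_sum fun S hS => ?_
  have h1 : 0 ≤ ∏ e ∈ S, x e := Finset.prod_nonneg fun e _ => (hx e).1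
  have h2 : 0 ≤ ∏ e ∈ A \ S, (1 - x e) :=
    Finset.prod_nonneg fun e _ => sub_nonneg.2 (hx e).2
  have := h S (Finset.mem_powerset.1 hS)
  gcongr

theorem mleAux_anti {E : Type*} [DecidableEq E] (A : Finset E) :
    ∀ (G : Finset E → ℝ) (_ : ∀ S T, S ⊆ T → T ⊆ A → G T ≤ G S) (x y : E → ℝ)
    (_ : ∀ e, x e ∈ Set.Icc (0 : ℝ) 1) (_ : ∀ e, y e ∈ Set.Icc (0 : ℝ) 1)
    (_ : ∀ e, x e ≤ y e), mleAux A G y ≤ mleAux A G x := by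
  induction A using Finset.induction_on with
  | empty => intro G _ x y _ _ _; simp [mleAux]
  | insert a A ha ih =>
    intro G hG x y hx hy hxy
    rw [mleAux_insert A a ha, mleAux_insert A a ha]
    have h1 := ih (fun S => G (insert a S))
      (fun S T h h' => hG _ _ (Finset.insert_subset_insert a h)
        (Finset.insert_subset_insert a h')) x y hx hy hxy
    have h2 := ih G (fun S T h h' => hG _ _ h (h'.trans (Finset.subset_insert a A)))
      x y hx hy hxy
    have h3 := mleAux_mono A (fun S => G (insert a S)) G x hx
      (fun S hS => hG _ _ (Finset.subset_insert a S) (Finset.insert_subset_insert a hS))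
    have e1 := mul_le_mul_of_nonneg_left h1 (hy a).1
    have e2 := mul_le_mul_of_nonneg_left h2 (sub_nonneg.2 (hy a).2)
    have e3 := mul_nonneg (sub_nonneg.2 (hxy a)) (sub_nonneg.2 h3)
    linarith

theorem mleAux_sub {E : Type*} [DecidableEq E] (A : Finset E)
    (F G : Finset E → ℝ) (x : E → ℝ) :
    mleAux A (fun S => F S - G S) x = mleAux A F x - mleAux A G x := by
  unfold mleAux
  rw [← Finset.sum_sub_distrib]
  exact Finset.sum_congr rfl fun S _ => by ring

theorem mleAux_concave {E : Type*} [DecidableEq E] (A : Finset E) :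
    ∀ (F : Finset E → ℝ) (_ : ∀ S T : Finset E, S ⊆ T → ∀ e ∉ T,
      F (insert e T) - F T ≤ F (insert e S) - F S)
    (x y z : E → ℝ) (_ : ∀ e, x e ∈ Set.Icc (0 : ℝ) 1) (_ : ∀ e, y e ∈ Set.Icc (0 : ℝ) 1)
    (_ : ∀ e, x e ≤ y e) (p q : ℝ) (_ : 0 ≤ p) (_ : 0 ≤ q) (_ : p + q = 1)
    (_ : ∀ e, z e = p * x e + q * y e),
    p * mleAux A F x + q * mleAux A F y ≤ mleAux A F z := by
  induction A using Finset.induction_on with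
  | empty =>
    intro F _ x y z _ _ _ p q _ _ hpq _
    simp [mleAux, ← add_mul, hpq]
  | insert a A ha ih =>
    intro F hF x y z hx hy hxy p q hp hq hpq hz
    have h1 := ih (fun S => F (insert a S)) (by
      intro S T hST e he
      by_cases hea : e = a
      · subst hea; simp
      · have := hF (insert a S) (insert a T) (Finset.insert_subset_insert a hST) e
          (by simp [hea, he])
        rwa [Finset.insert_comm e a T, Finset.insert_comm e a S] at this)
      x y z hx hy hxy p q hp hq hpq hz
    have h2 := ih F hF x y z hx hy hxy p q hp hq hpq hz
    have h3 := mleAux_anti A (fun S => F (insert a S) - F S)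
      (fun S T h h' => hF S T h a (fun h'' => ha (h' h''))) x y hx hy hxy
    rw [mleAux_sub, mleAux_sub] at h3
    simp only [mleAux_insert A a ha]
    have hza := hz a
    have z0 : 0 ≤ z a := by
      rw [hza]; exact add_nonneg (mul_nonneg hp (hx a).1) (mul_nonneg hq (hy a).1)
    have z1 : 0 ≤ 1 - z a := by
      have := mul_nonneg hp (sub_nonneg.2 (hx a).2)
      have := mul_nonneg hq (sub_nonneg.2 (hy a).2)
      rw [hza]; linarith
    have e1 := mul_le_mul_of_nonneg_left h1 z0
    have e2 := mul_le_mul_of_nonneg_left h2 z1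
    have e3 := mul_nonneg (mul_nonneg hp hq)
      (mul_nonneg (sub_nonneg.2 (hxy a)) (sub_nonneg.2 h3))
    refine le_trans ?_ (add_le_add e1 e2)
    rw [hza]
    obtain rfl : p = 1 - q := by linarith
    linarith

theorem multilinearExt_eq_aux {E : Type*} [Fintype E] [DecidableEq E]
    (F : Finset E → ℝ) (x : E → ℝ) : multilinearExt F x = mleAux Finset.univ F x := by
  simp [multilinearExt, mleAux, Finset.compl_eq_univ_sdiff]

/-- If `F : 2^E → ℝ` is submodular, then its multilinear extension `f` is concave along
any nonnegative direction: for `x ∈ [0,1]^E` and `d ≥ 0`, the map `t ↦ f(x + t·d)` is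
concave on `{t ≥ 0 : x + t·d ∈ [0,1]^E}`. -/
theorem multilinearExt_concave_along_nonneg_dir {E : Type*} [Fintype E] [DecidableEq E]
    (F : Finset E → ℝ)
    (hsub : ∀ S T : Finset E, S ⊆ T → ∀ e ∉ T,
      F (insert e T) - F T ≤ F (insert e S) - F S)
    (x d : E → ℝ) (hx : ∀ e, x e ∈ Set.Icc (0 : ℝ) 1) (hd : ∀ e, 0 ≤ d e) :
    ConcaveOn ℝ {t : ℝ | 0 ≤ t ∧ ∀ e, x e + t * d e ∈ Set.Icc (0 : ℝ) 1}
      (fun t => multilinearExt F (fun e => x e + t * d e)) := by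
  constructor
  · intro s hs t ht p q hp hq hpq
    refine ⟨add_nonneg (mul_nonneg hp hs.1) (mul_nonneg hq ht.1), fun e => ?_⟩
    have := (convex_Icc (0 : ℝ) 1) (hs.2 e) (ht.2 e) hp hq hpq
    convert this using 1
    simp only [smul_eq_mul]
    obtain rfl : p = 1 - q := by linarith
    ring
  · intro s hs t ht p q hp hq hpq
    simp only [multilinearExt_eq_aux, smul_eq_mul]
    rcases le_total s t with h | h
    · refine mleAux_concave _ F hsub _ _ _ hs.2 ht.2 (fun e => ?_) p q hp hq hpq
        (fun e => ?_)
      · have := mul_le_mul_of_nonneg_right h (hd e)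
        linarith
      · obtain rfl : p = 1 - q := by linarith
        ring
    · rw [add_comm (p * _) (q * _)]
      refine mleAux_concave _ F hsub _ _ _ ht.2 hs.2 (fun e => ?_) q p hq hp
        (by linarith) (fun e => ?_)
      · have := mul_le_mul_of_nonneg_right h (hd e)
        linarith
      · obtain rfl : p = 1 - q := by linarith
        ring
end

section
/- Let R be a finite nonempty set, let ε, Δ > 0, and let q, q' : R → ℝ satisfy |q(r) − q'(r)| ≤ Δ for every r ∈ R. Let p and p' be the probability distributions on R assigning to each r probability proportional to exp((ε/(2Δ))·q(r)) and exp((ε/(2Δ))·q'(r)) respectively. Then for every r ∈ R, p(r) ≤ exp(ε)·p'(r). -/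
open Finset

/-- ε-differential privacy of the exponential mechanism: if two quality scores `q, q'` on a
finite nonempty set `R` differ pointwise by at most `Δ`, then the output distributions
(proportional to `exp((ε/(2Δ))·q(·))` resp. `exp((ε/(2Δ))·q'(·))`) satisfy
`p(r) ≤ e^ε · p'(r)` for every `r`. -/
theorem exponential_mechanism_privacy {R : Type*} [Fintype R] [Nonempty R]
    (ε Δ : ℝ) (hε : 0 < ε) (hΔ : 0 < Δ)
    (q q' : R → ℝ) (hsens : ∀ r, |q r - q' r| ≤ Δ) (r : R) :
    Real.exp (ε / (2 * Δ) * q r) / (∑ r' : R, Real.exp (ε / (2 * Δ) * q r')) ≤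
      Real.exp ε *
        (Real.exp (ε / (2 * Δ) * q' r) / ∑ r' : R, Real.exp (ε / (2 * Δ) * q' r')) := by
  have hc : 0 < ε / (2 * Δ) := by positivity
  have hcd : ε / (2 * Δ) * Δ = ε / 2 := by field_simp
  generalize ε / (2 * Δ) = c at hc hcd
  have h1 : ∀ x, Real.exp (c * q x) ≤ Real.exp (ε / 2) * Real.exp (c * q' x) := by
    intro x
    rw [← Real.exp_add, Real.exp_le_exp]
    have := (abs_le.mp (hsens x)).2
    nlinarith [mul_le_mul_of_nonneg_left this hc.le]
  have h2 : ∀ x, Real.exp (c * q' x) ≤ Real.exp (ε / 2) * Real.exp (c * q x) := by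
    intro x
    rw [← Real.exp_add, Real.exp_le_exp]
    have := (abs_le.mp (hsens x)).1
    nlinarith [mul_le_mul_of_nonneg_left this hc.le]
  have hs : (∑ x : R, Real.exp (c * q' x)) ≤
      Real.exp (ε / 2) * ∑ x : R, Real.exp (c * q x) := by
    rw [Finset.mul_sum]
    exact Finset.sum_le_sum fun x _ => h2 x
  have hp : 0 < ∑ x : R, Real.exp (c * q x) :=
    Finset.sum_pos (fun x _ => Real.exp_pos _) Finset.univ_nonempty
  have hp' : 0 < ∑ x : R, Real.exp (c * q' x) :=
    Finset.sum_pos (fun x _ => Real.exp_pos _) Finset.univ_nonempty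
  have he : Real.exp ε = Real.exp (ε / 2) * Real.exp (ε / 2) := by
    rw [← Real.exp_add, add_halves]
  rw [← mul_div_assoc, div_le_div_iff₀ hp hp', he]
  calc _ ≤ (Real.exp (ε / 2) * Real.exp (c * q' r)) *
        (Real.exp (ε / 2) * ∑ x : R, Real.exp (c * q x)) :=
        mul_le_mul (h1 r) hs hp'.le (by positivity)
    _ = _ := by ring
end

section
/- Let M = (E, I) be a matroid on a finite set E with rank r(M) and matroid polytope P(M). Let F, F' : 2^E → [0,1] be set functions with |F(S) − F'(S)| ≤ Δ for all S ⊆ E, and let f, f' be their multilinear extensions. Then for every x ∈ [0,1]^E and every y ∈ P(M), |⟨y, ∇f(x) − ∇f'(x)⟩| ≤ 2·Δ·r(M). -/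
open Finset

lemma multilinearExt_update {E : Type*} [Fintype E] [DecidableEq E]
    (F : Finset E → ℝ) (x : E → ℝ) (e : E) (t : ℝ) :
    multilinearExt F (Function.update x e t) =
      t * multilinearExt F (Function.update x e 1)
        + (1 - t) * multilinearExt F (Function.update x e 0) := by
  unfold multilinearExt
  rw [Finset.mul_sum, Finset.mul_sum, ← Finset.sum_add_distrib]
  refine Finset.sum_congr rfl fun S _ => ?_
  have key : ∀ u : ℝ, (fun i => 1 - Function.update x e u i)
      = Function.update (fun i => 1 - x i) e (1 - u) := by
    intro u
    funext i
    by_cases h : i = e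
    · subst h; simp
    · simp [h]
  have key2 : ∀ u : ℝ, ∏ i ∈ Sᶜ, (1 - Function.update x e u i)
      = ∏ i ∈ Sᶜ, Function.update (fun i => 1 - x i) e (1 - u) i := by
    intro u
    rw [← key u]
  simp only [key2]
  by_cases h : e ∈ S
  · have h' : e ∉ Sᶜ := by simpa using h
    simp only [Finset.prod_update_of_mem h, Finset.prod_update_of_notMem h']
    ring
  · have h' : e ∈ Sᶜ := by simpa using h
    simp only [Finset.prod_update_of_mem h', Finset.prod_update_of_notMem h]
    ring

lemma multilinearGrad_eq {E : Type*} [Fintype E] [DecidableEq E]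
    (F : Finset E → ℝ) (x : E → ℝ) (e : E) :
    multilinearGrad F x e =
      multilinearExt F (Function.update x e 1) - multilinearExt F (Function.update x e 0) := by
  unfold multilinearGrad
  rw [funext (multilinearExt_update F x e)]
  set A := multilinearExt F (Function.update x e 1)
  set B := multilinearExt F (Function.update x e 0)
  have h : HasDerivAt (fun t : ℝ => t * A + (1 - t) * B) (1 * A + (0 - 1) * B) (x e) :=
    ((hasDerivAt_id (x e)).mul_const A).add
      (((hasDerivAt_const (x e) (1 : ℝ)).sub (hasDerivAt_id (x e))).mul_const B)
  rw [h.deriv]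
  ring

lemma multilinearExt_diff {E : Type*} [Fintype E] [DecidableEq E]
    (F F' : Finset E → ℝ) (Δ : ℝ) (hsens : ∀ S, |F S - F' S| ≤ Δ)
    (x : E → ℝ) (hx : ∀ e, x e ∈ Set.Icc (0 : ℝ) 1) :
    |multilinearExt F x - multilinearExt F' x| ≤ Δ := by
  have hsum : ∑ S : Finset E, (∏ e ∈ S, x e) * ∏ e ∈ Sᶜ, (1 - x e) = 1 := by
    have := Finset.prod_add x (fun e => 1 - x e) Finset.univ
    simp only [add_sub_cancel, Finset.prod_const_one, Finset.powerset_univ] at this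
    simp only [Finset.compl_eq_univ_sdiff]
    exact this.symm
  unfold multilinearExt
  rw [← Finset.sum_sub_distrib]
  refine (Finset.abs_sum_le_sum_abs _ _).trans ?_
  calc _ ≤ ∑ S : Finset E, Δ * ((∏ e ∈ S, x e) * ∏ e ∈ Sᶜ, (1 - x e)) := by
        refine Finset.sum_le_sum fun S _ => ?_
        have hw : 0 ≤ (∏ e ∈ S, x e) * ∏ e ∈ Sᶜ, (1 - x e) :=
          mul_nonneg (Finset.prod_nonneg fun i _ => (hx i).1)
            (Finset.prod_nonneg fun i _ => sub_nonneg.2 (hx i).2)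
        rw [mul_assoc, mul_assoc, ← sub_mul, abs_mul, abs_of_nonneg hw]
        exact mul_le_mul_of_nonneg_right (hsens S) hw
    _ = Δ := by rw [← Finset.mul_sum, hsum, mul_one]

/-- Let `M = (E, Indep)` be a matroid with rank function `rk` and matroid polytope
`P(M) = {y ≥ 0 : ∑_{e ∈ S} y(e) ≤ rk(S) for all S}`.  If `F, F' : 2^E → [0,1]` satisfy
`|F(S) − F'(S)| ≤ Δ` for all `S`, then for every `x ∈ [0,1]^E` and `y ∈ P(M)`,
`|⟨y, ∇f(x) − ∇f'(x)⟩| ≤ 2·Δ·r(M)` where `r(M) = rk(E)`. -/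
theorem inner_grad_diff_le_rank {E : Type*} [Fintype E] [DecidableEq E]
    (Indep : Finset E → Prop)
    (h_empty : Indep ∅)
    (h_subset : ∀ ⦃A B : Finset E⦄, A ⊆ B → Indep B → Indep A)
    (h_exchange : ∀ ⦃A B : Finset E⦄, Indep A → Indep B → A.card < B.card →
      ∃ e ∈ B \ A, Indep (insert e A))
    (rk : Finset E → ℕ)
    (hrk : ∀ S : Finset E, IsGreatest {n | ∃ A ⊆ S, Indep A ∧ A.card = n} (rk S))
    (F F' : Finset E → ℝ)
    (hF : ∀ S, F S ∈ Set.Icc (0 : ℝ) 1) (hF' : ∀ S, F' S ∈ Set.Icc (0 : ℝ) 1)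
    (Δ : ℝ) (hsens : ∀ S, |F S - F' S| ≤ Δ)
    (x y : E → ℝ) (hx : ∀ e, x e ∈ Set.Icc (0 : ℝ) 1)
    (hy0 : ∀ e, 0 ≤ y e) (hyP : ∀ S : Finset E, ∑ e ∈ S, y e ≤ (rk S : ℝ)) :
    |∑ e, y e * (multilinearGrad F x e - multilinearGrad F' x e)| ≤
      2 * Δ * (rk Finset.univ : ℝ) := by
  have hΔ : 0 ≤ Δ := (abs_nonneg _).trans (hsens ∅)
  have hup : ∀ (e : E) (u : ℝ), u ∈ Set.Icc (0 : ℝ) 1 →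
      ∀ i, Function.update x e u i ∈ Set.Icc (0 : ℝ) 1 := by
    intro e u hu i
    by_cases h : i = e
    · subst h; simpa using hu
    · simpa [h] using hx i
  have hg : ∀ e, |multilinearGrad F x e - multilinearGrad F' x e| ≤ 2 * Δ := by
    intro e
    rw [multilinearGrad_eq, multilinearGrad_eq]
    have h1 := abs_le.1 (multilinearExt_diff F F' Δ hsens _ (hup e 1 (by simp)))
    have h0 := abs_le.1 (multilinearExt_diff F F' Δ hsens _ (hup e 0 (by simp)))
    rw [abs_le]
    constructor <;> linarith [h1.1, h1.2, h0.1, h0.2]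
  calc _ ≤ ∑ e, |y e * (multilinearGrad F x e - multilinearGrad F' x e)| :=
        Finset.abs_sum_le_sum_abs _ _
    _ ≤ ∑ e, 2 * Δ * y e := by
        refine Finset.sum_le_sum fun e _ => ?_
        rw [abs_mul, abs_of_nonneg (hy0 e), mul_comm]
        exact mul_le_mul_of_nonneg_right (hg e) (hy0 e)
    _ ≤ 2 * Δ * (rk Finset.univ : ℝ) := by
        rw [← Finset.mul_sum]
        exact mul_le_mul_of_nonneg_left (hyP Finset.univ) (by positivity)
end
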